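/- arXiv:1704.02578 — 9 statements merged into one kernel-verified Lean document; each statement's English description precedes it below -/
import Mathlib

section
/- (Strictness of the Kernel Score; key step in the proof of Theorem 3.) If two probability density functions p and q on ℝ satisfy ∫_{{x : p(x)+q(x) > 0}} ((p(x)+q(x))/2) · C( p(x)/(p(x)+q(x)) ) dx = 1/2, then p = q almost everywhere with respect to Lebesgue measure. -/
open MeasureTheory Set

/-!
A strictly concave function symmetric about `1/2` is maximal only at `1/2`, so the integrand is
pointwise at most `(p + q) / 4`, with equality only where `p = q`. As `(p + q) / 4` integrates to
`1/2`, the hypothesis says that the nonnegative difference has integral zero, hence vanishes almost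
everywhere. Integrability of `p`, `q` and of the integrand is automatic: a Bochner integral of a
non-integrable function is `0`, while these integrals are not.
-/

/-- The midpoint of `η` and `1 - η` is `1/2`, and `C` agrees at these two points, so strict
concavity makes the value at the midpoint strictly larger. -/
theorem lt_half_of_ne (C : ℝ → ℝ)
    (hC_concave : StrictConcaveOn ℝ (Icc 0 1) C)
    (hC_sym : ∀ η ∈ Icc (0:ℝ) 1, C η = C (1 - η)) (hChalf : C (1/2) = 1/2)
    {η : ℝ} (hη : η ∈ Icc (0:ℝ) 1) (hne : η ≠ 1/2) : C η < 1/2 := by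
  have hη' : 1 - η ∈ Icc (0:ℝ) 1 := ⟨by linarith [hη.2], by linarith [hη.1]⟩
  have h := hC_concave.2 hη hη' (fun h => hne (by linarith))
    (by norm_num : (0:ℝ) < 1/2) (by norm_num : (0:ℝ) < 1/2) (by norm_num)
  simp only [smul_eq_mul] at h
  rw [← hC_sym η hη, show (1/2 : ℝ) * η + 1/2 * (1 - η) = 1/2 by ring, hChalf] at h
  linarith

/-- (Strictness of the Kernel Score.) If two probability density functions `p` and `q` on `ℝ`
satisfy `∫_{p+q>0} ((p+q)/2) · C(p/(p+q)) = 1/2`, then `p = q` Lebesgue-almost everywhere. -/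
theorem kernel_score_strict (C p q : ℝ → ℝ)
    (hC_cont : ContinuousOn C (Icc 0 1))
    (hC_concave : StrictConcaveOn ℝ (Icc 0 1) C)
    (hC_sym : ∀ η ∈ Icc (0:ℝ) 1, C η = C (1 - η))
    (hC0 : C 0 = 0) (hC1 : C 1 = 0) (hChalf : C (1/2) = 1/2)
    (hp_meas : Measurable p) (hq_meas : Measurable q)
    (hp_nonneg : ∀ x, 0 ≤ p x) (hq_nonneg : ∀ x, 0 ≤ q x)
    (hp_int : ∫ x, p x = 1) (hq_int : ∫ x, q x = 1)
    (heq : (∫ x in {x | 0 < p x + q x}, ((p x + q x) / 2) * C (p x / (p x + q x))) = 1/2) :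
    p =ᵐ[volume] q := by
  have hp : Integrable p := by
    by_contra h
    simp [integral_undef h] at hp_int
  have hq : Integrable q := by
    by_contra h
    simp [integral_undef h] at hq_int
  have hηmem : ∀ x, p x / (p x + q x) ∈ Icc (0:ℝ) 1 := fun x =>
    ⟨div_nonneg (hp_nonneg x) (add_nonneg (hp_nonneg x) (hq_nonneg x)),
      div_le_one_of_le₀ (by linarith [hq_nonneg x]) (add_nonneg (hp_nonneg x) (hq_nonneg x))⟩
  -- Off `{p + q > 0}` the prefactor `(p + q) / 2` vanishes, so the restriction can be dropped.
  rw [setIntegral_eq_integral_of_forall_compl_eq_zero (fun x hx => by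
    have h0 : p x + q x = 0 :=
      le_antisymm (not_lt.mp hx) (add_nonneg (hp_nonneg x) (hq_nonneg x))
    simp [h0])] at heq
  have hf : Integrable (fun x => ((p x + q x) / 2) * C (p x / (p x + q x))) := by
    by_contra h
    rw [integral_undef h] at heq
    norm_num at heq
  have hs : Integrable (fun x => (p x + q x) / 4) := (hp.add hq).div_const 4
  have hsint : ∫ x, (p x + q x) / 4 = 1/2 := by
    rw [integral_div, integral_add hp hq, hp_int, hq_int]
    norm_num
  have hnonneg : 0 ≤ fun x => (p x + q x) / 4 - ((p x + q x) / 2) * C (p x / (p x + q x)) := by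
    intro x
    have hle : C (p x / (p x + q x)) ≤ 1/2 := by
      by_cases h : p x / (p x + q x) = 1/2
      · rw [h, hChalf]
      · exact (lt_half_of_ne C hC_concave hC_sym hChalf (hηmem x) h).le
    have := mul_nonneg (add_nonneg (hp_nonneg x) (hq_nonneg x)) (sub_nonneg.mpr hle)
    simp only [Pi.zero_apply]
    linarith
  have hzero : ∫ x, ((p x + q x) / 4 - ((p x + q x) / 2) * C (p x / (p x + q x))) = 0 := by
    rw [integral_sub hs hf, hsint, heq, sub_self]
  filter_upwards [(integral_eq_zero_iff_of_nonneg hnonneg (hs.sub hf)).mp hzero] with x hx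
  simp only [Pi.zero_apply] at hx
  rcases (add_nonneg (hp_nonneg x) (hq_nonneg x)).eq_or_lt with h0 | hpos
  · linarith [hp_nonneg x, hq_nonneg x]
  · by_contra hne
    have hη : p x / (p x + q x) ≠ 1/2 := by
      intro h
      rw [div_eq_iff hpos.ne'] at h
      exact hne (by linarith)
    have := mul_pos hpos
      (sub_pos.mpr (lt_half_of_ne C hC_concave hC_sym hChalf (hηmem x) hη))
    linarith
end

section
/- (Theorem 6: the MMD as a special case of the Bhattacharyya Kernel Score.) Let H be a real inner product space, u, v ∈ H with u ≠ v, w = (u − v)/‖u − v‖, μ₁ = ⟨u, w⟩, μ₂ = ⟨v, w⟩, and let σ > 0. Let p and q be the Gaussian densities on ℝ with means μ₁ and μ₂ respectively and common variance σ². Then ‖u − v‖² = −8σ² · log( ∫_ℝ √(p(x)·q(x)) dx ). In particular the MMD ‖u − v‖² is proportional to −log(2S), where S = (1/2)∫√(pq) is the Bhattacharyya Kernel Score of the projected embedded distributions under the equal-variance Gaussian assumption. -/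
/-!
The pointwise identity `((x - a)² + (x - b)²) / 2 = (x - (a + b) / 2)² + (a - b)² / 4` shows that
the geometric mean of two Gaussian densities with common variance `σ²` is the Gaussian density
centred at the midpoint of the means, scaled by `exp (-(a - b)² / (8σ²))`. A Gaussian density has
integral one, so this factor is the Bhattacharyya coefficient `∫ √(pq)`. Finally
`μ₁ - μ₂ = ⟪u - v, w⟫ = ‖u - v‖`, because `w` is the unit vector along `u - v`.
-/

open MeasureTheory
open scoped RealInnerProductSpace

/-- The Gaussian density on `ℝ` with mean `μ` and variance `σ²`. -/
noncomputable def gaussianDensity (μ σ : ℝ) (x : ℝ) : ℝ :=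
  (1 / (σ * Real.sqrt (2 * Real.pi))) * Real.exp (-(x - μ)^2 / (2 * σ^2))

theorem integral_gaussianDensity (μ σ : ℝ) (hσ : 0 < σ) : ∫ x, gaussianDensity μ σ x = 1 := by
  have hv : Real.toNNReal (σ ^ 2) ≠ 0 := (Real.toNNReal_pos.mpr (by positivity)).ne'
  rw [← ProbabilityTheory.integral_gaussianPDFReal_eq_one μ hv]
  congr 1
  ext x
  simp only [gaussianDensity, ProbabilityTheory.gaussianPDFReal, Real.coe_toNNReal _ (sq_nonneg σ)]
  rw [Real.sqrt_mul (by positivity) (σ ^ 2), Real.sqrt_sq hσ.le, one_div, mul_comm σ]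

theorem sqrt_gaussianDensity_mul (a b σ : ℝ) (hσ : 0 < σ) (x : ℝ) :
    Real.sqrt (gaussianDensity a σ x * gaussianDensity b σ x) =
      Real.exp (-(a - b) ^ 2 / (8 * σ ^ 2)) * gaussianDensity ((a + b) / 2) σ x := by
  rw [Real.sqrt_eq_iff_mul_self_eq_of_pos (by unfold gaussianDensity; positivity)]
  have key : Real.exp (-(a - b) ^ 2 / (8 * σ ^ 2)) * Real.exp (-(a - b) ^ 2 / (8 * σ ^ 2)) *
      (Real.exp (-(x - (a + b) / 2) ^ 2 / (2 * σ ^ 2)) *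
        Real.exp (-(x - (a + b) / 2) ^ 2 / (2 * σ ^ 2))) =
      Real.exp (-(x - a) ^ 2 / (2 * σ ^ 2)) * Real.exp (-(x - b) ^ 2 / (2 * σ ^ 2)) := by
    simp only [← Real.exp_add]
    congr 1
    field_simp
    ring
  unfold gaussianDensity
  linear_combination (1 / (σ * Real.sqrt (2 * Real.pi))) ^ 2 * key

/-- (Theorem 6: the MMD as a special case of the Bhattacharyya Kernel Score.) With
`w = (u − v)/‖u − v‖`, `μ₁ = ⟪u, w⟫`, `μ₂ = ⟪v, w⟫`, `σ > 0`, and `p, q` the Gaussian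
densities with means `μ₁, μ₂` and common variance `σ²`,
`‖u − v‖² = −8σ²·log(∫ √(p·q))`. -/
theorem mmd_eq_neg_log_bhattacharyya_score
    {H : Type*} [NormedAddCommGroup H] [InnerProductSpace ℝ H]
    (u v : H) (huv : u ≠ v) (σ : ℝ) (hσ : 0 < σ)
    (w : H) (hw : w = ‖u - v‖⁻¹ • (u - v))
    (μ₁ μ₂ : ℝ) (hμ₁ : μ₁ = ⟪u, w⟫) (hμ₂ : μ₂ = ⟪v, w⟫) :
    ‖u - v‖^2 =
      -8 * σ^2 * Real.log (∫ x, Real.sqrt (gaussianDensity μ₁ σ x * gaussianDensity μ₂ σ x)) := by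
  have hn : ‖u - v‖ ≠ 0 := norm_ne_zero_iff.mpr (sub_ne_zero.mpr huv)
  have hd : μ₁ - μ₂ = ‖u - v‖ := by
    rw [hμ₁, hμ₂, ← inner_sub_left, hw, real_inner_smul_right, real_inner_self_eq_norm_sq]
    field_simp
  simp only [sqrt_gaussianDensity_mul μ₁ μ₂ σ hσ]
  rw [integral_const_mul, integral_gaussianDensity _ σ hσ, mul_one, Real.log_exp, hd]
  field_simp
end

section
/- (Pointwise minimum conditional risk identity underlying Theorem 2 and Lemma 7.) Let C* : [0,1] → ℝ be continuously differentiable with C*(η) = C*(1−η) for all η ∈ [0,1], and let f : [0,1] → ℝ be injective whose inverse f⁻¹ (defined on the range of f) satisfies f⁻¹(−v) = 1 − f⁻¹(v) whenever v and −v lie in the range of f. Define the loss φ(v) = C*(f⁻¹(v)) + (1 − f⁻¹(v))·C*′(f⁻¹(v)). Then for every η ∈ [0,1] with f(η) and −f(η) in the range of f, the conditional risk at the optimal link satisfies η·φ(f(η)) + (1−η)·φ(−f(η)) = C*(η). -/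
open Set

/-!
Put `q = 1 - η`. The hypotheses on the inverse give `finv (f η) = η` and `finv (-f η) = q`, and
`Cs q = Cs η`, so the conditional risk equals `Cs η + η * q * (Cs' η + Cs' q)`. Differentiating the
symmetry `Cs x = Cs (1 - x)` shows that `Cs'` is antisymmetric about `1 / 2`, so the last term
vanishes.
-/

/-- The symmetry of `C` is known on `[0,1]` only, so at the endpoints the derivatives of the two
sides are compared within `[0,1]`, where they are still unique. -/
lemma deriv_antisymm_of_symm {C C' : ℝ → ℝ}
    (hderiv : ∀ x ∈ Icc (0:ℝ) 1, HasDerivAt C (C' x) x)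
    (hsym : ∀ x ∈ Icc (0:ℝ) 1, C x = C (1 - x)) {x : ℝ} (hx : x ∈ Icc (0:ℝ) 1) :
    C' (1 - x) = -C' x := by
  have hx' : 1 - x ∈ Icc (0:ℝ) 1 := ⟨by linarith [hx.2], by linarith [hx.1]⟩
  have h₁ : HasDerivWithinAt C (-C' (1 - x)) (Icc 0 1) x :=
    ((hderiv _ hx').comp_const_sub 1 x).hasDerivWithinAt.congr hsym (hsym x hx)
  have h₂ := (uniqueDiffOn_Icc (zero_lt_one' ℝ) x hx).eq_deriv _ h₁ (hderiv x hx).hasDerivWithinAt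
  linarith

/-- (Pointwise minimum conditional risk identity underlying Theorem 2 and Lemma 7.)
With `C*` continuously differentiable and symmetric on `[0,1]`, `f` injective on `[0,1]`
with inverse `finv` on its range satisfying `finv(−v) = 1 − finv(v)`, and the proper loss
`φ(v) = C*(finv v) + (1 − finv v)·C*′(finv v)`, the conditional risk at the optimal link
satisfies `η·φ(f η) + (1−η)·φ(−f η) = C*(η)`. -/
theorem conditional_risk_at_optimal_link (Cs Cs' f finv : ℝ → ℝ)
    (hderiv : ∀ η ∈ Icc (0:ℝ) 1, HasDerivAt Cs (Cs' η) η)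
    (hderiv_cont : ContinuousOn Cs' (Icc 0 1))
    (hsym : ∀ η ∈ Icc (0:ℝ) 1, Cs η = Cs (1 - η))
    (hinj : InjOn f (Icc 0 1))
    (hlinv : ∀ η ∈ Icc (0:ℝ) 1, finv (f η) = η)
    (hneg : ∀ v, v ∈ f '' Icc 0 1 → -v ∈ f '' Icc 0 1 → finv (-v) = 1 - finv v)
    (φ : ℝ → ℝ) (hφ : ∀ v, φ v = Cs (finv v) + (1 - finv v) * Cs' (finv v))
    (η : ℝ) (hη : η ∈ Icc (0:ℝ) 1) (hmem : -f η ∈ f '' Icc 0 1) :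
    η * φ (f η) + (1 - η) * φ (-f η) = Cs η := by
  have h_neg : finv (-f η) = 1 - η := by
    rw [hneg _ (mem_image_of_mem f hη) hmem, hlinv η hη]
  rw [hφ, hφ, h_neg, hlinv η hη, ← hsym η hη, deriv_antisymm_of_symm hderiv hsym hη]
  ring
end

section
/- (Lemma 7, minimum-risk formula.) Let (X, μ) be a measure space with probability measure μ and let η : X → [0,1] be measurable. Let C*, f, and the proper loss φ be as in the stated construction, with f(η(x)) and −f(η(x)) in the range of f for μ-a.e. x, and assume x ↦ C*(η(x)) is μ-integrable. Then the minimum risk R(p*) of the optimal predictor p*(x) = f(η(x)) satisfies R(p*) = ∫_X [ η(x)·φ(f(η(x))) + (1−η(x))·φ(−f(η(x))) ] dμ(x) = ∫_X C*(η(x)) dμ(x). -/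
/-!
The two integrands agree almost everywhere. Write `t = η x`. Since `finv (f t) = t` and
`finv (-f t) = 1 - t`, the left integrand is
`t * (Cs t + (1 - t) * Cs' t) + (1 - t) * (Cs (1 - t) + t * Cs' (1 - t))`.
The symmetry `Cs t = Cs (1 - t)` merges the `Cs` terms into `Cs t`, and its derivative,
`Cs' (1 - t) = -Cs' t` (`deriv_antisymm_of_symm`), cancels the two remaining terms.
-/

open Set MeasureTheory

/-- Differentiating the symmetry `Cs t = Cs (1 - t)`. It holds only on `[0, 1]`, so the derivatives
are compared within that interval, where they are unique even at the endpoints. -/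
lemma deriv_antisymm_of_symm_s6 {Cs Cs' : ℝ → ℝ}
    (hderiv : ∀ t ∈ Icc (0:ℝ) 1, HasDerivAt Cs (Cs' t) t)
    (hsym : ∀ t ∈ Icc (0:ℝ) 1, Cs t = Cs (1 - t)) {t : ℝ} (ht : t ∈ Icc (0:ℝ) 1) :
    Cs' (1 - t) = -Cs' t := by
  have ht' : 1 - t ∈ Icc (0:ℝ) 1 := ⟨by linarith [ht.2], by linarith [ht.1]⟩
  have h1 : HasDerivWithinAt Cs (Cs' t) (Icc 0 1) t := (hderiv t ht).hasDerivWithinAt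
  have h2 : HasDerivAt (fun s => Cs (1 - s)) (-Cs' (1 - t)) t :=
    (hderiv (1 - t) ht').comp_const_sub 1 t
  have h3 : HasDerivWithinAt Cs (-Cs' (1 - t)) (Icc 0 1) t :=
    h2.hasDerivWithinAt.congr hsym (hsym t ht)
  have h4 := (uniqueDiffOn_Icc (zero_lt_one' ℝ) t ht).eq_deriv _ h1 h3
  linarith

/-- (Lemma 7, minimum-risk formula.) With `C*`, `f`, `φ` as in the proper-loss construction and
`η : X → [0,1]` measurable on a probability space `(X, μ)`, the minimum risk of the optimal
predictor `p*(x) = f(η(x))` satisfies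
`R(p*) = ∫ [η·φ(f∘η) + (1−η)·φ(−f∘η)] dμ = ∫ C*(η) dμ`. -/
theorem minimum_risk_eq_integral_min_cond_risk
    {X : Type*} [MeasurableSpace X] (μ : Measure X) [IsProbabilityMeasure μ]
    (Cs Cs' f finv : ℝ → ℝ)
    (hderiv : ∀ t ∈ Icc (0:ℝ) 1, HasDerivAt Cs (Cs' t) t)
    (hderiv_cont : ContinuousOn Cs' (Icc 0 1))
    (hsym : ∀ t ∈ Icc (0:ℝ) 1, Cs t = Cs (1 - t))
    (hinj : InjOn f (Icc 0 1))
    (hlinv : ∀ t ∈ Icc (0:ℝ) 1, finv (f t) = t)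
    (hneg : ∀ v, v ∈ f '' Icc 0 1 → -v ∈ f '' Icc 0 1 → finv (-v) = 1 - finv v)
    (φ : ℝ → ℝ) (hφ : ∀ v, φ v = Cs (finv v) + (1 - finv v) * Cs' (finv v))
    (η : X → ℝ) (hη_meas : Measurable η)
    (hη_mem : ∀ᵐ x ∂μ, η x ∈ Icc (0:ℝ) 1)
    (hmem : ∀ᵐ x ∂μ, -f (η x) ∈ f '' Icc 0 1)
    (hint : Integrable (fun x => Cs (η x)) μ) :
    (∫ x, (η x * φ (f (η x)) + (1 - η x) * φ (-f (η x))) ∂μ) = ∫ x, Cs (η x) ∂μ := by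
  refine integral_congr_ae ?_
  filter_upwards [hη_mem, hmem] with x hx hnx
  have h1 := hlinv _ hx
  have h2 := hneg _ (mem_image_of_mem f hx) hnx
  rw [h1] at h2
  rw [hφ, hφ, h1, h2, ← hsym _ hx, deriv_antisymm_of_symm_s6 hderiv hsym hx]
  ring
end

section
/- (Theorem 9, risk bound in density form: the minimum risk upper-bounds the Bayes error.) Let C* : [0,1] → ℝ be a concave function satisfying C*(η) = C*(1−η) for all η ∈ [0,1], C*(0) = C*(1) = 0, and C*(1/2) = 1/2, and let p, q be probability density functions on ℝ. Then ∫_{{p+q>0}} ((p(x)+q(x))/2) · C*( p(x)/(p(x)+q(x)) ) dx ≥ (1/2)·∫_ℝ min(p(x), q(x)) dx, the right-hand side being the Bayes error of the binary classification problem with class-conditional densities p, q and equal priors. -/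
/-!
Concavity bounds `C*` below by its chords through `(0, 0)`, `(1/2, 1/2)` and `(1, 0)`, so that
`min η (1 - η) ≤ C* η` on `[0, 1]` (`min_le_of_concaveOn`). At `η = p / (p + q)`, multiplied by
`(p + q) / 2`, this is the pointwise inequality `min p q / 2 ≤ ((p + q) / 2) * C* η`, and the result
follows by integration.

Since the Bochner integral of a non-integrable function is `0`, the integrand on the left must be
shown integrable. It is dominated by `(p + q) / 4`, because concavity and symmetry give
`C* ≤ C* (1/2) = 1/2` (`le_half_of_concaveOn`), and it is measurable because the superlevel sets of
a concave function are convex, hence intervals (`measurable_indicator_of_concaveOn`).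
-/

open Set MeasureTheory

theorem min_le_of_concaveOn {Cs : ℝ → ℝ} (hconc : ConcaveOn ℝ (Icc 0 1) Cs)
    (h0 : Cs 0 = 0) (h1 : Cs 1 = 0) (hhalf : Cs (1/2) = 1/2) {η : ℝ} (hη : η ∈ Icc (0:ℝ) 1) :
    min η (1 - η) ≤ Cs η := by
  obtain ⟨ha, hb⟩ := hη
  have m0 : (0:ℝ) ∈ Icc (0:ℝ) 1 := by norm_num
  have m1 : (1:ℝ) ∈ Icc (0:ℝ) 1 := by norm_num
  have mh : (1/2:ℝ) ∈ Icc (0:ℝ) 1 := by norm_num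
  rcases le_total η (1/2) with h | h
  · have := hconc.2 mh m0 (show 0 ≤ 2 * η by linarith) (show 0 ≤ 1 - 2 * η by linarith) (by ring)
    simp only [smul_eq_mul, h0, hhalf] at this
    rw [show 2 * η * (1/2) + (1 - 2 * η) * 0 = η by ring] at this
    exact (min_le_left _ _).trans (by linarith)
  · have := hconc.2 mh m1 (show 0 ≤ 2 * (1 - η) by linarith)
      (show 0 ≤ 2 * η - 1 by linarith) (by ring)
    simp only [smul_eq_mul, h1, hhalf] at this
    rw [show 2 * (1 - η) * (1/2) + (2 * η - 1) * 1 = η by ring] at this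
    exact (min_le_right _ _).trans (by linarith)

theorem le_half_of_concaveOn {Cs : ℝ → ℝ} (hconc : ConcaveOn ℝ (Icc 0 1) Cs)
    (hsym : ∀ η ∈ Icc (0:ℝ) 1, Cs η = Cs (1 - η)) (hhalf : Cs (1/2) = 1/2)
    {η : ℝ} (hη : η ∈ Icc (0:ℝ) 1) : Cs η ≤ 1/2 := by
  have hη' : 1 - η ∈ Icc (0:ℝ) 1 := ⟨by linarith [hη.2], by linarith [hη.1]⟩
  have := hconc.2 hη hη' (show (0:ℝ) ≤ 1/2 by norm_num) (show (0:ℝ) ≤ 1/2 by norm_num)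
    (by norm_num)
  simp only [smul_eq_mul, ← hsym η hη] at this
  rw [show 1/2 * η + 1/2 * (1 - η) = 1/2 by ring, hhalf] at this
  linarith

theorem measurable_indicator_of_concaveOn {s : Set ℝ} {f : ℝ → ℝ} (hf : ConcaveOn ℝ s f) :
    Measurable (s.indicator f) := by
  have hs : MeasurableSet s := hf.1.ordConnected.measurableSet
  refine measurable_of_Ici fun r => ?_
  have : s.indicator f ⁻¹' Ici r = {x ∈ s | r ≤ f x} ∪ (sᶜ ∩ {_x | r ≤ 0}) := by
    ext x
    by_cases hx : x ∈ s <;> simp [hx]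
  rw [this]
  exact (hf.convex_ge r).ordConnected.measurableSet.union (hs.compl.inter (MeasurableSet.const _))

/-- (Theorem 9, risk bound in density form.) For a concave, symmetric `C*` on `[0,1]` with
`C*(0) = C*(1) = 0` and `C*(1/2) = 1/2`, and probability densities `p, q` on `ℝ`, the minimum
risk `∫_{p+q>0} ((p+q)/2)·C*(p/(p+q))` upper-bounds the Bayes error `(1/2)·∫ min(p,q)`. -/
theorem minimum_risk_ge_bayes_error (Cs p q : ℝ → ℝ)
    (hconc : ConcaveOn ℝ (Icc 0 1) Cs)
    (hsym : ∀ η ∈ Icc (0:ℝ) 1, Cs η = Cs (1 - η))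
    (h0 : Cs 0 = 0) (h1 : Cs 1 = 0) (hhalf : Cs (1/2) = 1/2)
    (hp_meas : Measurable p) (hq_meas : Measurable q)
    (hp_nonneg : ∀ x, 0 ≤ p x) (hq_nonneg : ∀ x, 0 ≤ q x)
    (hp_int : ∫ x, p x = 1) (hq_int : ∫ x, q x = 1) :
    (∫ x in {x | 0 < p x + q x}, ((p x + q x) / 2) * Cs (p x / (p x + q x))) ≥
      (1/2) * ∫ x, min (p x) (q x) := by
  have hp : Integrable p := .of_integral_ne_zero (by simp [hp_int])
  have hq : Integrable q := .of_integral_ne_zero (by simp [hq_int])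
  -- This holds even where `p + q = 0`, since then the quotient is `0` by convention.
  have hη : ∀ x, p x / (p x + q x) ∈ Icc (0:ℝ) 1 := fun x =>
    ⟨div_nonneg (hp_nonneg x) (add_nonneg (hp_nonneg x) (hq_nonneg x)),
      div_le_one_of_le₀ (by linarith [hq_nonneg x]) (add_nonneg (hp_nonneg x) (hq_nonneg x))⟩
  have hmeas : Measurable fun x => ((p x + q x) / 2) * Cs (p x / (p x + q x)) := by
    have hCs : Measurable fun x => Cs (p x / (p x + q x)) := by
      have := (measurable_indicator_of_concaveOn hconc).comp (hp_meas.div (hp_meas.add hq_meas))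
      convert this using 2 with x
      exact (indicator_of_mem (hη x) Cs).symm
    exact ((hp_meas.add hq_meas).div_const 2).mul hCs
  have hint : Integrable fun x => ((p x + q x) / 2) * Cs (p x / (p x + q x)) := by
    refine ((hp.add hq).div_const 4).mono' hmeas.aestronglyMeasurable (.of_forall fun x => ?_)
    have hs : 0 ≤ (p x + q x) / 2 := by linarith [hp_nonneg x, hq_nonneg x]
    have hlo : 0 ≤ Cs (p x / (p x + q x)) :=
      (le_min (hη x).1 (sub_nonneg.2 (hη x).2)).trans (min_le_of_concaveOn hconc h0 h1 hhalf (hη x))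
    have hup := mul_le_mul_of_nonneg_left (le_half_of_concaveOn hconc hsym hhalf (hη x)) hs
    rw [Real.norm_of_nonneg (mul_nonneg hs hlo)]
    simp only [Pi.add_apply]
    linarith
  have hmin : ∫ x, min (p x) (q x) = ∫ x in {x | 0 < p x + q x}, min (p x) (q x) := by
    refine (setIntegral_eq_integral_of_forall_compl_eq_zero fun x hx => ?_).symm
    have hx' : p x + q x ≤ 0 := not_lt.1 hx
    have hpx : p x = 0 := by linarith [hp_nonneg x, hq_nonneg x]
    have hqx : q x = 0 := by linarith [hp_nonneg x, hq_nonneg x]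
    simp [hpx, hqx]
  rw [hmin, ← integral_const_mul]
  refine setIntegral_mono_on ((hp.inf hq).const_mul (1/2)).integrableOn hint.integrableOn
    (measurableSet_lt measurable_const (hp_meas.add hq_meas)) fun x hx => ?_
  have hx : 0 < p x + q x := hx
  calc 1/2 * min (p x) (q x)
      = (p x + q x) / 2 * min (p x / (p x + q x)) (1 - p x / (p x + q x)) := by
        rw [mul_min_of_nonneg _ _ (show (0:ℝ) ≤ 1/2 by norm_num),
          mul_min_of_nonneg _ _ (show 0 ≤ (p x + q x) / 2 by linarith)]
        congr 1 <;> field_simp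
        ring
    _ ≤ _ := mul_le_mul_of_nonneg_left (min_le_of_concaveOn hconc h0 h1 hhalf (hη x)) (by linarith)
end

section
/- (Theorem 9, arbitrary tightness.) For every δ > 0 there exists a continuously differentiable, strictly concave function C* : [0,1] → ℝ with C*(η) = C*(1−η) for all η ∈ [0,1], C*(0) = C*(1) = 0, and C*(1/2) = 1/2, such that C*(η) − min(η, 1−η) ≤ δ for all η ∈ [0,1]. -/
/-!
Smooth the absolute value to the hyperbola `x ↦ √(x² + c²)` with `c = 2δ`. It is smooth, even and
strictly convex, and after normalising it to `g x = (√(x² + c²) - c) / (√(1 + c²) - c)` it satisfies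
`g 0 = 0` and `g (±1) = 1`. Since `min η (1 - η) = (1 - |2η - 1|) / 2`, the function
`η ↦ (1 - g (2η - 1)) / 2` has all the required properties. For the tightness, the denominator of
`g` lies in `(0, 1]`, so `g x ≥ √(x² + c²) - c ≥ |x| - c`, and the gap is at most `c / 2 = δ`.
Strict convexity of the hyperbola (`strictConvexOn_sqrt_sq_add_sq`) is the strict Cauchy–Schwarz
inequality for the vectors `(x, c)` and `(y, c)`, which are not parallel when `x ≠ y`.
-/

open Set

lemma mul_add_sq_lt_sqrt_mul_sqrt {c x y : ℝ} (hc : 0 < c) (hxy : x ≠ y) :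
    x * y + c ^ 2 < √(x ^ 2 + c ^ 2) * √(y ^ 2 + c ^ 2) := by
  rw [← Real.sqrt_mul (by positivity)]
  apply Real.lt_sqrt_of_sq_lt
  have h : 0 < c ^ 2 * (x - y) ^ 2 :=
    mul_pos (pow_pos hc 2) (sq_pos_of_ne_zero (sub_ne_zero.2 hxy))
  nlinarith

lemma strictConvexOn_sqrt_sq_add_sq {c : ℝ} (hc : 0 < c) :
    StrictConvexOn ℝ univ fun x : ℝ => √(x ^ 2 + c ^ 2) := by
  refine ⟨convex_univ, fun x _ y _ hxy a b ha hb hab => ?_⟩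
  simp only [smul_eq_mul]
  have hS := Real.sq_sqrt (show 0 ≤ x ^ 2 + c ^ 2 by positivity)
  have hT := Real.sq_sqrt (show 0 ≤ y ^ 2 + c ^ 2 by positivity)
  have hST := mul_add_sq_lt_sqrt_mul_sqrt hc hxy
  rw [Real.sqrt_lt' (by positivity)]
  have h := mul_lt_mul_of_pos_left hST (mul_pos ha hb)
  have hc2 : c ^ 2 = (a + b) ^ 2 * c ^ 2 := by rw [hab]; ring
  calc (a * x + b * y) ^ 2 + c ^ 2
      = a ^ 2 * (x ^ 2 + c ^ 2) + b ^ 2 * (y ^ 2 + c ^ 2) + 2 * (a * b * (x * y + c ^ 2)) := by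
        linear_combination hc2
    _ < a ^ 2 * √(x ^ 2 + c ^ 2) ^ 2 + b ^ 2 * √(y ^ 2 + c ^ 2) ^ 2
          + 2 * (a * b * (√(x ^ 2 + c ^ 2) * √(y ^ 2 + c ^ 2))) := by
        rw [hS, hT]; linarith
    _ = _ := by ring

/-- (Theorem 9, arbitrary tightness.) For every `δ > 0` there is a continuously
differentiable, strictly concave, symmetric `C*` on `[0,1]` with `C*(0) = C*(1) = 0` and
`C*(1/2) = 1/2` such that `C*(η) − min(η, 1−η) ≤ δ` for all `η ∈ [0,1]`. -/
theorem exists_tight_min_cond_risk (δ : ℝ) (hδ : 0 < δ) :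
    ∃ Cs : ℝ → ℝ,
      ContDiffOn ℝ 1 Cs (Icc 0 1) ∧
      StrictConcaveOn ℝ (Icc 0 1) Cs ∧
      (∀ η ∈ Icc (0:ℝ) 1, Cs η = Cs (1 - η)) ∧
      Cs 0 = 0 ∧ Cs 1 = 0 ∧ Cs (1/2) = 1/2 ∧
      ∀ η ∈ Icc (0:ℝ) 1, Cs η - min η (1 - η) ≤ δ := by
  obtain ⟨c, hc⟩ : ∃ c, c = 2 * δ := ⟨_, rfl⟩
  have hc0 : 0 < c := by linarith
  obtain ⟨D, hD⟩ : ∃ D, D = √(1 + c ^ 2) - c := ⟨_, rfl⟩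
  have hD0 : 0 < D := by
    have : c < √(1 + c ^ 2) := Real.lt_sqrt_of_sq_lt (by linarith)
    linarith
  have hD1 : D ≤ 1 := by
    have : √(1 + c ^ 2) ≤ 1 + c := Real.sqrt_le_iff.2 ⟨by linarith, by nlinarith⟩
    linarith
  refine ⟨fun η => (1 - (√((2 * η - 1) ^ 2 + c ^ 2) - c) / D) / 2,
    ?_, ?_, ?_, ?_, ?_, ?_, ?_⟩
  · apply ContDiff.contDiffOn
    have : ContDiff ℝ 1 fun η : ℝ => √((2 * η - 1) ^ 2 + c ^ 2) :=
      ContDiff.sqrt (by fun_prop) fun η => by positivity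
    fun_prop
  · refine ⟨convex_Icc 0 1, fun x _ y _ hxy a b ha hb hab => ?_⟩
    have h := (strictConvexOn_sqrt_sq_add_sq hc0).2 (mem_univ (2 * x - 1)) (mem_univ (2 * y - 1))
      (fun h => hxy (by linarith)) ha hb hab
    simp only [smul_eq_mul] at h ⊢
    rw [show a * (2 * x - 1) + b * (2 * y - 1) = 2 * (a * x + b * y) - 1 by
      linear_combination -hab] at h
    have h' := div_lt_div_of_pos_right h hD0
    rw [add_div, mul_div_assoc, mul_div_assoc] at h'
    have hk : (a + b) * (1 + c / D) = 1 + c / D := by rw [hab, one_mul]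
    simp only [sub_div] at h' ⊢
    linarith
  · intro η _
    have : (2 * (1 - η) - 1) ^ 2 = (2 * η - 1) ^ 2 := by ring
    simp only [this]
  · have : √((2 * 0 - 1) ^ 2 + c ^ 2) - c = D := by rw [hD]; norm_num
    simp only [this, div_self hD0.ne']; norm_num
  · have : √((2 * 1 - 1) ^ 2 + c ^ 2) - c = D := by rw [hD]; norm_num
    simp only [this, div_self hD0.ne']; norm_num
  · norm_num [Real.sqrt_sq hc0.le]
  · intro η _
    have habs : |2 * η - 1| ≤ √((2 * η - 1) ^ 2 + c ^ 2) :=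
      Real.abs_le_sqrt (by nlinarith)
    have hnn : 0 ≤ √((2 * η - 1) ^ 2 + c ^ 2) - c := by
      have : c ≤ √((2 * η - 1) ^ 2 + c ^ 2) := Real.le_sqrt_of_sq_le (by nlinarith)
      linarith
    have hdiv := le_div_self hnn hD0 hD1
    have h1 := (abs_le.1 habs).1
    have h2 := (abs_le.1 habs).2
    simp only
    rcases min_choice η (1 - η) with h | h <;> rw [h] <;> linarith
end

section
/- (Structural properties of the polynomial minimum conditional risk functions.) For every integer n ≥ 0, the function C_{Poly-n} satisfies: C_{Poly-n}(0) = C_{Poly-n}(1) = 0, C_{Poly-n}(1/2) = 1/2, C_{Poly-n}(η) = C_{Poly-n}(1−η) for all η ∈ [0,1], C_{Poly-n} is twice continuously differentiable with second derivative C_{Poly-n}″(η) = −K2_n·(η(1−η))ⁿ, and C_{Poly-n} is strictly concave on [0,1]. -/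
/-!
Write `F = Fpoly n`. By the fundamental theorem of calculus `F' = Q_n + K1_n`, which vanishes at
`1/2` by the choice of `K1_n`, and `F'' = -(η(1-η))ⁿ`. Since `F''` is symmetric about `1/2`,
`η ↦ F'(η) + F'(1-η)` is constant, hence zero; so `η ↦ F(η) - F(1-η)` is constant, hence zero.
Thus `F(1) = F(0) = 0`. As `F'' < 0` on `(0,1)`, `F` is strictly concave on `[0,1]`, which forces
`F(1/2) > 0`; so the normalising constant `K2_n` is positive and everything passes to
`CPoly n = K2_n * F`.
-/

open Set MeasureTheory

/-- `Q_n(η) = −∫₀^η (t(1−t))ⁿ dt`. -/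
noncomputable def Qpoly (n : ℕ) (η : ℝ) : ℝ := -∫ t in (0:ℝ)..η, (t * (1 - t))^n

/-- `K1_n = −Q_n(1/2)`. -/
noncomputable def K1poly (n : ℕ) : ℝ := -Qpoly n (1/2)

/-- `F_n(η) = ∫₀^η Q_n(s) ds + K1_n·η`. -/
noncomputable def Fpoly (n : ℕ) (η : ℝ) : ℝ := (∫ s in (0:ℝ)..η, Qpoly n s) + K1poly n * η

/-- `K2_n = (1/2)/F_n(1/2)`. -/
noncomputable def K2poly (n : ℕ) : ℝ := (1/2) / Fpoly n (1/2)

/-- The polynomial minimum conditional risk function `C_{Poly-n}(η) = K2_n·F_n(η)`. -/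
noncomputable def CPoly (n : ℕ) (η : ℝ) : ℝ := K2poly n * Fpoly n η

theorem hasDerivAt_Qpoly (n : ℕ) (x : ℝ) : HasDerivAt (Qpoly n) (-(x * (1 - x)) ^ n) x := by
  have hc : Continuous fun t : ℝ => (t * (1 - t)) ^ n := by fun_prop
  exact (hc.integral_hasStrictDerivAt 0 x).hasDerivAt.neg

theorem continuous_Qpoly (n : ℕ) : Continuous (Qpoly n) :=
  continuous_iff_continuousAt.2 fun x => (hasDerivAt_Qpoly n x).continuousAt

theorem hasDerivAt_Fpoly (n : ℕ) (x : ℝ) : HasDerivAt (Fpoly n) (Qpoly n x + K1poly n) x := by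
  have h := ((continuous_Qpoly n).integral_hasStrictDerivAt 0 x).hasDerivAt.add
    ((hasDerivAt_id x).const_mul (K1poly n))
  rw [mul_one] at h
  exact h

theorem hasDerivAt_const_sub (x : ℝ) : HasDerivAt (fun y : ℝ => 1 - y) (-1) x := by
  simpa using (hasDerivAt_id x).const_sub 1

/-- `F'` is odd about `1/2`. -/
theorem Qpoly_add_symm (n : ℕ) (x : ℝ) :
    (Qpoly n x + K1poly n) + (Qpoly n (1 - x) + K1poly n) = 0 := by
  have hd : ∀ y, HasDerivAt
      (fun y => (Qpoly n y + K1poly n) + (Qpoly n (1 - y) + K1poly n)) 0 y := by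
    intro y
    have h := ((hasDerivAt_Qpoly n y).add_const (K1poly n)).add
      (((hasDerivAt_Qpoly n (1 - y)).comp y (hasDerivAt_const_sub y)).add_const (K1poly n))
    refine h.congr_deriv ?_
    rw [show (1 - y) * (1 - (1 - y)) = y * (1 - y) by ring]
    ring
  have := is_const_of_deriv_eq_zero (fun y => (hd y).differentiableAt) (fun y => (hd y).deriv)
    x (1 / 2)
  rw [this, K1poly]
  norm_num

theorem Fpoly_symm (n : ℕ) (x : ℝ) : Fpoly n x = Fpoly n (1 - x) := by
  have hd : ∀ y, HasDerivAt (fun y => Fpoly n y - Fpoly n (1 - y)) 0 y := by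
    intro y
    have h := (hasDerivAt_Fpoly n y).sub
      ((hasDerivAt_Fpoly n (1 - y)).comp y (hasDerivAt_const_sub y))
    refine h.congr_deriv ?_
    linarith [Qpoly_add_symm n y]
  have := is_const_of_deriv_eq_zero (fun y => (hd y).differentiableAt) (fun y => (hd y).deriv)
    x (1 / 2)
  norm_num at this
  linarith

theorem Fpoly_zero (n : ℕ) : Fpoly n 0 = 0 := by simp [Fpoly]

theorem Fpoly_one (n : ℕ) : Fpoly n 1 = 0 := by
  rw [Fpoly_symm, sub_self, Fpoly_zero]

theorem deriv_const_mul_Fpoly (n : ℕ) (c : ℝ) :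
    deriv (fun x => c * Fpoly n x) = fun x => c * (Qpoly n x + K1poly n) :=
  funext fun x => ((hasDerivAt_Fpoly n x).const_mul c).deriv

theorem deriv2_const_mul_Fpoly (n : ℕ) (c : ℝ) :
    deriv (deriv (fun x => c * Fpoly n x)) = fun x => -c * (x * (1 - x)) ^ n := by
  rw [deriv_const_mul_Fpoly]
  funext x
  rw [(((hasDerivAt_Qpoly n x).add_const (K1poly n)).const_mul c).deriv]
  ring

theorem differentiable_const_mul_Fpoly (n : ℕ) (c : ℝ) :
    Differentiable ℝ (fun x => c * Fpoly n x) :=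
  fun x => ((hasDerivAt_Fpoly n x).const_mul c).differentiableAt

theorem contDiff_const_mul_Fpoly (n : ℕ) (c : ℝ) : ContDiff ℝ 2 (fun x => c * Fpoly n x) := by
  rw [show (2 : WithTop ℕ∞) = 1 + 1 by norm_num, contDiff_succ_iff_deriv]
  refine ⟨differentiable_const_mul_Fpoly n c, by simp, ?_⟩
  rw [contDiff_one_iff_deriv, deriv2_const_mul_Fpoly, deriv_const_mul_Fpoly]
  exact ⟨fun x => (((hasDerivAt_Qpoly n x).add_const _).const_mul c).differentiableAt,
    by fun_prop⟩

theorem strictConcaveOn_const_mul_Fpoly (n : ℕ) {c : ℝ} (hc : 0 < c) :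
    StrictConcaveOn ℝ (Icc 0 1) (fun x => c * Fpoly n x) := by
  refine strictConcaveOn_of_deriv2_neg (convex_Icc 0 1)
    (differentiable_const_mul_Fpoly n c).continuous.continuousOn fun x hx => ?_
  rw [interior_Icc] at hx
  have hx1 : 0 < 1 - x := sub_pos.2 hx.2
  have hp : 0 < c * (x * (1 - x)) ^ n := mul_pos hc (pow_pos (mul_pos hx.1 hx1) n)
  change deriv (deriv _) x < 0
  rw [deriv2_const_mul_Fpoly]
  linarith

/-- The midpoint case of strict concavity, since `F` vanishes at both endpoints. -/
theorem Fpoly_half_pos (n : ℕ) : 0 < Fpoly n (1 / 2) := by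
  have h := (strictConcaveOn_const_mul_Fpoly n one_pos).2
    (left_mem_Icc.2 zero_le_one) (right_mem_Icc.2 zero_le_one) zero_ne_one
    (show (0 : ℝ) < 1 / 2 by norm_num) (show (0 : ℝ) < 1 / 2 by norm_num) (by norm_num)
  simpa [Fpoly_zero, Fpoly_one] using h

/-- (Structural properties of the polynomial minimum conditional risk functions.)
`C_{Poly-n}` vanishes at `0` and `1`, equals `1/2` at `1/2`, is symmetric about `1/2`,
is twice continuously differentiable with `C_{Poly-n}″(η) = −K2_n·(η(1−η))ⁿ`, and is
strictly concave on `[0,1]`. -/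
theorem cpoly_structural_properties (n : ℕ) :
    CPoly n 0 = 0 ∧ CPoly n 1 = 0 ∧ CPoly n (1/2) = 1/2 ∧
    (∀ η ∈ Icc (0:ℝ) 1, CPoly n η = CPoly n (1 - η)) ∧
    ContDiff ℝ 2 (CPoly n) ∧
    (∀ η ∈ Icc (0:ℝ) 1, deriv (deriv (CPoly n)) η = -(K2poly n) * (η * (1 - η))^n) ∧
    StrictConcaveOn ℝ (Icc 0 1) (CPoly n) := by
  have hpos := Fpoly_half_pos n
  have hK : 0 < K2poly n := div_pos (by norm_num) hpos
  refine ⟨by simp [CPoly, Fpoly_zero], by simp [CPoly, Fpoly_one],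
    div_mul_cancel₀ _ hpos.ne', fun η _ => ?_, contDiff_const_mul_Fpoly n _, fun η _ => ?_,
    strictConcaveOn_const_mul_Fpoly n hK⟩
  · rw [CPoly, CPoly, ← Fpoly_symm]
  · exact congrFun (deriv2_const_mul_Fpoly n (K2poly n)) η
end

section
/- (Theorem 10, pointwise convergence.) For every η ∈ [0,1], lim_{n→∞} C_{Poly-n}(η) = min(η, 1−η). -/
/-!
On `[0,1]` the function `t(1−t)` has its unique maximum at `1/2`, so the probability densities
proportional to `(t(1−t))ⁿ` concentrate at `1/2` (Laplace's method, available in Mathlib as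
`tendsto_setIntegral_pow_smul_of_unique_maximum_of_isCompact_of_continuousOn`).

Put `Iₙ = ∫₀¹ (t(1−t))ⁿ dt`. The symmetry `t ↦ 1−t` gives `K1_n = Iₙ/2`, and an integration by parts
turns the iterated integral in `F_n` into a single one:
`F_n(η) = η·Iₙ/2 − ∫₀¹ max(η−t, 0)·(t(1−t))ⁿ dt`.
By concentration `F_n(η)/Iₙ → η/2 − max(η−1/2, 0) = min(η, 1−η)/2`. The theorem follows since
`C_{Poly-n}(η)` is the quotient of the two such expressions at `η` and at `1/2`, times `1/2`.
-/

open Set MeasureTheory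

lemma continuous_bump (n : ℕ) : Continuous fun t : ℝ => (t * (1 - t))^n := by fun_prop

/-- Cauchy's formula for a repeated integral. -/
lemma integral_primitive {f : ℝ → ℝ} (hf : Continuous f) (η : ℝ) :
    ∫ s in (0:ℝ)..η, (∫ t in (0:ℝ)..s, f t) = ∫ t in (0:ℝ)..η, (η - t) * f t := by
  have h := intervalIntegral.integral_mul_deriv_eq_deriv_mul (a := 0) (b := η)
    (u := fun s => ∫ t in (0:ℝ)..s, f t) (u' := f) (v := fun s => s - η) (v' := fun _ => 1)
    (fun x _ => (hf.integral_hasStrictDerivAt 0 x).hasDerivAt)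
    (fun x _ => (hasDerivAt_id x).sub_const η)
    (hf.intervalIntegrable _ _) (continuous_const.intervalIntegrable _ _)
  simp only [mul_one, sub_self, mul_zero, intervalIntegral.integral_same, zero_mul, zero_sub] at h
  rw [h, ← intervalIntegral.integral_neg]
  congr 1
  ext t
  ring

/-- By the symmetry `t ↦ 1 - t`, half of the mass of `(t(1-t))ⁿ` lies on `[0, 1/2]`. -/
lemma K1poly_eq (n : ℕ) : K1poly n = (∫ t in (0:ℝ)..1, (t * (1 - t))^n) / 2 := by
  have hi := fun a b : ℝ => (continuous_bump n).intervalIntegrable (μ := volume) a b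
  have h1 := intervalIntegral.integral_add_adjacent_intervals (hi 0 (1/2)) (hi (1/2) 1)
  have h2 := intervalIntegral.integral_comp_sub_left (a := 0) (b := 1/2)
    (fun t : ℝ => (t * (1 - t))^n) 1
  have h3 : (fun t : ℝ => ((1 - t) * (1 - (1 - t)))^n) = fun t => (t * (1 - t))^n := by
    ext t
    congr 1
    ring
  rw [h3, sub_zero, show (1:ℝ) - 1/2 = 1/2 by norm_num] at h2
  simp only [K1poly, Qpoly, neg_neg]
  linarith

lemma Fpoly_eq (n : ℕ) {η : ℝ} (hη : η ∈ Icc (0:ℝ) 1) :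
    Fpoly n η = η / 2 * (∫ t in (0:ℝ)..1, (t * (1 - t))^n)
      - ∫ t in (0:ℝ)..1, (t * (1 - t))^n * max (η - t) 0 := by
  have hc : Continuous fun t : ℝ => (t * (1 - t))^n * max (η - t) 0 := by fun_prop
  have h1 : ∫ t in (0:ℝ)..η, (t * (1 - t))^n * max (η - t) 0
      = ∫ t in (0:ℝ)..η, (η - t) * (t * (1 - t))^n := by
    refine intervalIntegral.integral_congr fun t ht => ?_
    rw [uIcc_of_le hη.1] at ht
    simp only [max_eq_left (sub_nonneg.2 ht.2), mul_comm]
  have h2 : ∫ t in η..1, (t * (1 - t))^n * max (η - t) 0 = ∫ t in η..1, (0:ℝ) := by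
    refine intervalIntegral.integral_congr fun t ht => ?_
    rw [uIcc_of_le hη.2] at ht
    simp only [max_eq_right (sub_nonpos.2 ht.1), mul_zero]
  have h3 := intervalIntegral.integral_add_adjacent_intervals
    (hc.intervalIntegrable (μ := volume) 0 η) (hc.intervalIntegrable (μ := volume) η 1)
  rw [h1, h2, intervalIntegral.integral_zero, add_zero] at h3
  rw [Fpoly, K1poly_eq, ← h3, ← integral_primitive (continuous_bump n)]
  simp only [Qpoly, intervalIntegral.integral_neg]
  ring

/-- The mass of `(t(1-t))ⁿ` on `[0, 1]` concentrates at `1/2`, the unique maximum. -/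
lemma tendsto_bump_average {g : ℝ → ℝ} (hg : Continuous g) :
    Filter.Tendsto (fun n : ℕ => (∫ t in (0:ℝ)..1, (t * (1 - t))^n)⁻¹
      * ∫ t in (0:ℝ)..1, (t * (1 - t))^n * g t) Filter.atTop (nhds (g (1/2))) := by
  have h := tendsto_setIntegral_pow_smul_of_unique_maximum_of_isCompact_of_continuousOn
    (μ := volume) (s := Icc (0:ℝ) 1) (c := fun t => t * (1 - t)) (x₀ := 1/2) (g := g)
    isCompact_Icc (by fun_prop)
    (fun y _ hy => by
      have : 0 < (y - 1/2)^2 := sq_pos_of_ne_zero (sub_ne_zero.2 hy)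
      nlinarith)
    (fun t ht => mul_nonneg ht.1 (sub_nonneg.2 ht.2)) (by norm_num)
    (by rw [interior_Icc, closure_Ioo (by norm_num)]; norm_num)
    hg.continuousOn
  simpa only [intervalIntegral.integral_of_le zero_le_one, integral_Icc_eq_integral_Ioc,
    smul_eq_mul] using h

lemma bump_integral_pos (n : ℕ) : 0 < ∫ t in (0:ℝ)..1, (t * (1 - t))^n :=
  intervalIntegral.intervalIntegral_pos_of_pos_on ((continuous_bump n).intervalIntegrable _ _)
    (fun _ ht => pow_pos (mul_pos ht.1 (sub_pos.2 ht.2)) n) one_pos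

lemma tendsto_Fpoly_div {η : ℝ} (hη : η ∈ Icc (0:ℝ) 1) :
    Filter.Tendsto (fun n => Fpoly n η / ∫ t in (0:ℝ)..1, (t * (1 - t))^n) Filter.atTop
      (nhds (min η (1 - η) / 2)) := by
  have h := (tendsto_bump_average (g := fun t => max (η - t) 0) (by fun_prop)).const_sub (η / 2)
  have e : min η (1 - η) / 2 = η / 2 - max (η - 1/2) 0 := by
    rcases le_total η (1/2) with h | h
    · rw [min_eq_left (by linarith), max_eq_right (by linarith), sub_zero]
    · rw [min_eq_right (by linarith), max_eq_left (by linarith)]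
      ring
  rw [e]
  refine h.congr fun n => ?_
  have := (bump_integral_pos n).ne'
  rw [Fpoly_eq n hη]
  field_simp

/-- (Theorem 10, pointwise convergence.) `C_{Poly-n}(η) → min(η, 1−η)` as `n → ∞`, for every
`η ∈ [0,1]`. -/
theorem cpoly_tendsto_min (η : ℝ) (hη : η ∈ Icc (0:ℝ) 1) :
    Filter.Tendsto (fun n => CPoly n η) Filter.atTop (nhds (min η (1 - η))) := by
  have h2 := tendsto_Fpoly_div (η := 1/2) (by norm_num)
  have h := ((tendsto_Fpoly_div hη).div h2 (by norm_num)).const_mul (1/2)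
  have e : 1/2 * (min η (1 - η) / 2 / (min (1/2) (1 - 1/2) / 2)) = min η (1 - η) := by
    rw [show (1:ℝ) - 1/2 = 1/2 by norm_num, min_self]
    ring
  rw [e] at h
  refine h.congr fun n => ?_
  rw [Pi.div_apply, div_div_div_cancel_right₀ (bump_integral_pos n).ne', CPoly, K2poly]
  ring
end

section
/- (Normalization-constant limit used in the proof of Theorem 10.) With K1_n and K2_n as in the stated construction, lim_{n→∞} K1_n·K2_n = 1. -/
/-!
Write `K = K1_n`, `w t = t (1 - t)` and `b = (1/4)^(n+1) / (n+1)`. Since `Q_n' = -w^n` and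
`(w^(n+1) / (2(n+1)))' = (1/2 - t) w^n`, the function `(t - 1/2) Q_n - w^(n+1) / (2(n+1))` is an
antiderivative of `Q_n`, so `F_n(1/2) = (K - b) / 2` (`Fpoly_half`) and
`K1_n K2_n = K / (K - b) = (1 - b / K)⁻¹`.
It remains to see that `b / K → 0`. The integrand `w^n` stays above `(3/4) (1/4)^n` on an interval
of length of order `1 / √(n+1)` to the left of its peak `1/2`, by Bernoulli's inequality
(`K1poly_lower`), and hence `b / K ≤ (4/3) / √(n+1)`.
-/

open Set MeasureTheory

theorem continuous_integrand (n : ℕ) : Continuous fun t : ℝ => (t * (1 - t)) ^ n := by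
  fun_prop

theorem Qpoly_hasDerivAt (n : ℕ) (s : ℝ) : HasDerivAt (Qpoly n) (-(s * (1 - s)) ^ n) s :=
  ((continuous_integrand n).integral_hasStrictDerivAt 0 s).hasDerivAt.fun_neg

/-- An explicit antiderivative of `Q_n`, obtained by integrating by parts. -/
theorem antideriv_hasDerivAt (n : ℕ) (s : ℝ) :
    HasDerivAt (fun s => (s - 1/2) * Qpoly n s - (s * (1 - s)) ^ (n + 1) / (2 * (n + 1)))
      (Qpoly n s) s := by
  have h1 := ((hasDerivAt_id' s).sub_const (1/2 : ℝ)).fun_mul (Qpoly_hasDerivAt n s)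
  have h2 := ((((hasDerivAt_id' s).fun_mul ((hasDerivAt_id' s).const_sub 1)).fun_pow
    (n + 1)).div_const (2 * ((n : ℝ) + 1)))
  refine (h1.fun_sub h2).congr_deriv ?_
  have : (n : ℝ) + 1 ≠ 0 := by positivity
  push_cast [Nat.add_sub_cancel]
  field_simp
  ring

theorem Fpoly_half (n : ℕ) :
    Fpoly n (1/2) = (K1poly n - (1/4) ^ (n + 1) / (n + 1)) / 2 := by
  have hc : Continuous (Qpoly n) :=
    continuous_iff_continuousAt.2 fun s => (Qpoly_hasDerivAt n s).continuousAt
  have h0 : Qpoly n 0 = 0 := by simp [Qpoly]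
  have hn : (n : ℝ) + 1 ≠ 0 := by positivity
  rw [Fpoly, intervalIntegral.integral_eq_sub_of_hasDerivAt
    (fun s _ => antideriv_hasDerivAt n s) (hc.intervalIntegrable _ _), h0]
  norm_num
  field_simp
  ring

/-- `K1_n` decays no faster than `(1/4)^n / √(n+1)`. -/
theorem K1poly_lower (n : ℕ) :
    3 / 16 * (1/4) ^ n / √((n : ℝ) + 1) ≤ K1poly n := by
  have hr : (1 : ℝ) ≤ √((n : ℝ) + 1) := by
    rw [Real.one_le_sqrt]; linarith [(n.cast_nonneg : (0 : ℝ) ≤ n)]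
  have hsq : √((n : ℝ) + 1) ^ 2 = n + 1 := Real.sq_sqrt (by positivity)
  set r := √((n : ℝ) + 1)
  set c : ℝ := 1 / (4 * r) with hc
  have hc0 : 0 < c := by positivity
  have hc1 : c ≤ 1 / 4 := by
    rw [hc]; exact one_div_le_one_div_of_le (by norm_num) (by linarith)
  have hnc : 16 * (n : ℝ) * c ^ 2 ≤ 1 := by
    rw [hc, div_pow, mul_pow, hsq]
    field_simp
    linarith
  have hii (a b : ℝ) : IntervalIntegrable (fun t : ℝ => (t * (1 - t)) ^ n) volume a b :=
    (continuous_integrand n).intervalIntegrable a b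
  have hpt : ∀ t ∈ Icc (1/2 - c) (1/2), 3 / 4 * (1/4 : ℝ) ^ n ≤ (t * (1 - t)) ^ n := by
    intro t ht
    have hu : (1/2 - t) ^ 2 ≤ c ^ 2 := pow_le_pow_left₀ (by linarith [ht.2]) (by linarith [ht.1]) 2
    have hc2 : c ^ 2 ≤ 1 / 4 := by nlinarith
    have hb := one_add_mul_le_pow (a := -(4 * (1/2 - t) ^ 2)) (by linarith) n
    have hm : (n : ℝ) * (1/2 - t) ^ 2 ≤ n * c ^ 2 := by gcongr
    have he : t * (1 - t) = (1 + -(4 * (1/2 - t) ^ 2)) * (1/4) := by ring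
    rw [he, mul_pow]
    gcongr
    linarith
  have hconst : ∫ _ in (1/2 - c)..(1/2 : ℝ), 3 / 4 * (1/4 : ℝ) ^ n
      = 3 / 16 * (1/4) ^ n / r := by
    rw [intervalIntegral.integral_const, smul_eq_mul, hc]
    field_simp
    ring
  have hK : K1poly n = ∫ t in (0:ℝ)..(1/2), (t * (1 - t)) ^ n := by simp [K1poly, Qpoly]
  have hleft : 0 ≤ ∫ t in (0:ℝ)..(1/2 - c), (t * (1 - t)) ^ n :=
    intervalIntegral.integral_nonneg (by linarith) fun t ht =>
      pow_nonneg (mul_nonneg ht.1 (by linarith [ht.2])) n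
  have hright := intervalIntegral.integral_mono_on (by linarith)
    intervalIntegrable_const (hii (1/2 - c) (1/2)) hpt
  rw [hconst] at hright
  rw [hK, ← intervalIntegral.integral_add_adjacent_intervals (hii 0 (1/2 - c)) (hii _ _)]
  linarith

/-- (Normalization-constant limit used in the proof of Theorem 10.) `K1_n·K2_n → 1` as
`n → ∞`. -/
theorem k1_mul_k2_tendsto_one :
    Filter.Tendsto (fun n => K1poly n * K2poly n) Filter.atTop (nhds 1) := by
  have hr0 (n : ℕ) : 0 < √((n : ℝ) + 1) := Real.sqrt_pos.2 (by positivity)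
  have hKpos (n : ℕ) : 0 < K1poly n :=
    lt_of_lt_of_le (by have := hr0 n; positivity) (K1poly_lower n)
  have hlim : Filter.Tendsto (fun n : ℕ => (4 / 3 : ℝ) / √((n : ℝ) + 1)) Filter.atTop (nhds 0) :=
    tendsto_const_nhds.div_atTop (Real.tendsto_sqrt_atTop.comp
      (Filter.tendsto_atTop_add_const_right _ 1 tendsto_natCast_atTop_atTop))
  have hratio : Filter.Tendsto (fun n : ℕ => (1/4 : ℝ) ^ (n + 1) / (n + 1) / K1poly n)
      Filter.atTop (nhds 0) := by
    refine squeeze_zero (fun n => ?_) (fun n => ?_) hlim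
    · have := hKpos n
      positivity
    · rw [div_le_iff₀ (hKpos n)]
      have hr := hr0 n
      have hsq : √((n : ℝ) + 1) ^ 2 = n + 1 := Real.sq_sqrt (by positivity)
      calc (1/4 : ℝ) ^ (n + 1) / (n + 1)
          = 4 / 3 / √((n : ℝ) + 1) * (3 / 16 * (1/4) ^ n / √((n : ℝ) + 1)) := by
            rw [div_mul_div_comm, ← sq, hsq]
            ring
        _ ≤ _ := by
            gcongr
            exact K1poly_lower n
  have hinv := (hratio.const_sub 1).inv₀ (by norm_num)
  rw [sub_zero, inv_one] at hinv
  refine hinv.congr fun n => ?_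
  have hK := (hKpos n).ne'
  -- Both sides equal `K / (K - b)`; the manipulation is valid even without `K - b ≠ 0`.
  rw [K2poly, Fpoly_half, one_sub_div hK, inv_div, div_div_div_cancel_right₀ two_ne_zero,
    mul_one_div]
end
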